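/- Under the construction hypotheses, the following hold: (a) m_k ∈ wreach_r[v] with respect to (G, ≤) for every 1 ≤ k ≤ ℓ; (b) |S^ℓ| ≤ 2rℓ²; (c) for every vertex u ∈ V and every 1 ≤ k ≤ ℓ, if S^{k−1} does not r-separate u and v in G, then m_j ∈ wreach_{2r}[u] with respect to (G, ≤) for all 1 ≤ j ≤ k. -/

import Mathlib

/-!
Since `m_k` is least in the ball of radius `r` around `v` in `G_k`, it is least on every path of
length at most `r` from `v` inside `G_k`, which gives (a). If `S^{k-1}` does not `r`-separate `u`
from `v`, then for `j ≤ k` some path of length at most `r` from `u` to `v` avoids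
`S^{j-1} ⊆ S^{k-1}`; continuing it to `m_j` gives (c). For (b), each `π_{ij}` contributes at most
`2r` vertices once its start is charged to `π_{ii}`.
-/

open SimpleGraph

variable {V : Type*}

/-- `u ∈ wreach G r v` iff `u` is weakly `r`-reachable from `v`:
there is a path of length at most `r` from `v` to `u` on which `u` is the `≤`-least vertex. -/
def wreach [LinearOrder V] (G : SimpleGraph V) (r : ℕ) (v : V) : Set V :=
  {u | ∃ p : G.Walk v u, p.IsPath ∧ p.length ≤ r ∧ ∀ w ∈ p.support, u ≤ w}

/-- `S` r-separates `u` and `v` in `G`: every path of length at most `r`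
from `u` to `v` contains a vertex of `S`. -/
def Separates (G : SimpleGraph V) (r : ℕ) (S : Set V) (u v : V) : Prop :=
  ∀ p : G.Walk u v, p.IsPath → p.length ≤ r → ∃ w ∈ p.support, w ∈ S

/-- `Sk G m π k = S^k`: the union of the vertex sets of the paths `π i j` for
`1 ≤ i ≤ j ≤ k`. -/
def Sk (G : SimpleGraph V) (m : ℕ → V) (π : ∀ i j : ℕ, G.Walk (m i) (m j)) (k : ℕ) :
    Set V :=
  {w | ∃ i j : ℕ, 1 ≤ i ∧ i ≤ j ∧ j ≤ k ∧ w ∈ (π i j).support}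

/-- The ball of radius `r` around `v` in the subgraph of `G` induced on the complement of `S`,
as a set of vertices of `G`; it is empty when `v ∈ S`. The vertices of `G_k` at distance at most
`r` from `v` in `G_k` form the case `S = S^{k-1}`. -/
def ballAvoiding (G : SimpleGraph V) (r : ℕ) (S : Set V) (v : V) : Set V :=
  {w | ∃ p : G.Walk v w, p.IsPath ∧ p.length ≤ r ∧ ∀ x ∈ p.support, x ∉ S}

section Reachability

variable {G : SimpleGraph V} {r s : ℕ} {S T : Set V} {u v w : V}

lemma mem_ballAvoiding_of_mem_support (p : G.Walk v u) (hp : p.length ≤ r)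
    (hpS : ∀ x ∈ p.support, x ∉ S) (hw : w ∈ p.support) : w ∈ ballAvoiding G r S v := by
  classical
  refine ⟨(p.takeUntil w hw).bypass, Walk.bypass_isPath _, ?_, fun x hx ↦ hpS x ?_⟩
  · exact (Walk.length_bypass_le_length _).trans <| (p.length_takeUntil_le_length hw).trans hp
  · exact p.support_takeUntil_subset_support hw (Walk.support_bypass_subset_support _ hx)

lemma ballAvoiding_anti (hST : S ⊆ T) : ballAvoiding G r T v ⊆ ballAvoiding G r S v :=
  fun _ ⟨p, hp, hpr, hpT⟩ ↦ ⟨p, hp, hpr, fun x hx hxS ↦ hpT x hx (hST hxS)⟩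

lemma mem_ballAvoiding_of_not_separates (h : ¬ Separates G r S u v) :
    v ∈ ballAvoiding G r S u := by
  simpa only [Separates, ballAvoiding, not_forall, not_exists, not_and, exists_prop,
    Set.mem_ofPred_eq] using h

lemma mem_ballAvoiding_comm : u ∈ ballAvoiding G r S v ↔ v ∈ ballAvoiding G r S u := by
  suffices h : ∀ {u v}, u ∈ ballAvoiding G r S v → v ∈ ballAvoiding G r S u from ⟨h, h⟩
  rintro u v ⟨p, hp, hpr, hpS⟩
  exact ⟨p.reverse, hp.reverse, by rwa [Walk.length_reverse], by simpa using hpS⟩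

variable [LinearOrder V]

lemma mem_wreach_of_walk (p : G.Walk v u) (hp : p.length ≤ r) (hu : ∀ w ∈ p.support, u ≤ w) :
    u ∈ wreach G r v := by
  classical
  exact ⟨p.bypass, p.bypass_isPath, p.length_bypass_le_length.trans hp,
    fun w hw ↦ hu w (p.support_bypass_subset_support hw)⟩

lemma mem_wreach_of_isLeast_ballAvoiding (h : IsLeast (ballAvoiding G r S v) u) :
    u ∈ wreach G r v := by
  obtain ⟨⟨p, hp, hpr, hpS⟩, hmin⟩ := h
  exact ⟨p, hp, hpr, fun w hw ↦ hmin (mem_ballAvoiding_of_mem_support p hpr hpS hw)⟩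

lemma mem_wreach_add_of_isLeast_ballAvoiding (h : IsLeast (ballAvoiding G r S v) w)
    (hsr : s ≤ r) (hu : u ∈ ballAvoiding G s S v) : w ∈ wreach G (s + r) u := by
  obtain ⟨⟨q, -, hqr, hqS⟩, hmin⟩ := h
  obtain ⟨p, -, hps, hpS⟩ := hu
  refine mem_wreach_of_walk (p.reverse.append q) ?_ fun x hx ↦ hmin ?_
  · rw [Walk.length_append, Walk.length_reverse]
    lia
  · rw [Walk.mem_support_append_iff, Walk.support_reverse, List.mem_reverse] at hx
    rcases hx with hx | hx
    · exact mem_ballAvoiding_of_mem_support p (hps.trans hsr) hpS hx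
    · exact mem_ballAvoiding_of_mem_support q hqr hqS hx

end Reachability

section Counting

variable {G : SimpleGraph V}

lemma encard_insert_tail_support_le {u v : V} (p : G.Walk u v) :
    (insert v {w | w ∈ p.support.tail}).encard ≤ max 1 p.length := by
  classical
  cases p with
  | nil => simp
  | cons h q =>
    have hend : v ∈ {w | w ∈ q.support} := q.end_mem_support
    rw [Walk.support_cons, List.tail_cons, Set.insert_eq_of_mem hend, ← List.coe_toFinset,
      Set.encard_coe_eq_coe_finsetCard]
    have hcard : q.support.toFinset.card ≤ q.length + 1 :=
      q.length_support ▸ List.toFinset_card_le _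
    exact_mod_cast hcard.trans (le_max_right _ _)

variable {m : ℕ → V} {π : ∀ i j : ℕ, G.Walk (m i) (m j)}

lemma Sk_mono : Monotone (Sk G m π) :=
  fun _ _ hkl _ ⟨i, j, hi, hij, hj, hw⟩ ↦ ⟨i, j, hi, hij, hj.trans hkl, hw⟩

-- The start `m i` of `π i j` may be left out because it is the end of `π i i`.
lemma Sk_subset_biUnion_insert_tail_support (k : ℕ) :
    Sk G m π k ⊆ ⋃ a ∈ (Finset.Icc 1 k ×ˢ Finset.Icc 1 k).filter (fun a ↦ a.1 ≤ a.2),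
      insert (m a.2) {w | w ∈ (π a.1 a.2).support.tail} := by
  rintro w ⟨i, j, hi, hij, hj, hw⟩
  simp only [Finset.mem_filter, Finset.mem_product, Finset.mem_Icc, Set.mem_iUnion, Prod.exists]
  rcases Walk.mem_support_iff _ |>.mp hw with rfl | hw
  · exact ⟨i, i, by lia, Set.mem_insert _ _⟩
  · exact ⟨i, j, by lia, Set.mem_insert_of_mem _ hw⟩

lemma encard_Sk_le {n k : ℕ} (hn : 1 ≤ n)
    (hπ : ∀ i j : ℕ, 1 ≤ i → i ≤ j → j ≤ k → (π i j).length ≤ n) :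
    (Sk G m π k).encard ≤ (n * k ^ 2 : ℕ) := by
  set pairs := (Finset.Icc 1 k ×ˢ Finset.Icc 1 k).filter (fun a ↦ a.1 ≤ a.2) with hpairs
  have hcard : pairs.card ≤ k ^ 2 := by
    simpa [sq] using Finset.card_filter_le (Finset.Icc 1 k ×ˢ Finset.Icc 1 k) (fun a ↦ a.1 ≤ a.2)
  have hwalk : ∀ a ∈ pairs, (insert (m a.2) {w | w ∈ (π a.1 a.2).support.tail}).encard ≤ n := by
    intro a ha
    simp only [hpairs, Finset.mem_filter, Finset.mem_product, Finset.mem_Icc] at ha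
    have hlen := hπ a.1 a.2 ha.1.1.1 ha.2 ha.1.2.2
    exact (encard_insert_tail_support_le _).trans (mod_cast max_le hn hlen)
  calc (Sk G m π k).encard
      ≤ ∑ a ∈ pairs, (insert (m a.2) {w | w ∈ (π a.1 a.2).support.tail}).encard :=
        (Set.encard_le_encard (Sk_subset_biUnion_insert_tail_support k)).trans
          (Finset.set_encard_biUnion_le _ _)
    _ ≤ pairs.card • (n : ℕ∞) := Finset.sum_le_card_nsmul _ _ _ hwalk
    _ = (n * pairs.card : ℕ) := by rw [nsmul_eq_mul, mul_comm, Nat.cast_mul]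
    _ ≤ (n * k ^ 2 : ℕ) := mod_cast Nat.mul_le_mul_left n hcard

end Counting

theorem statement7_general [LinearOrder V] (G : SimpleGraph V) (r : ℕ) (hr : 1 ≤ r)
    (v : V) (ℓ : ℕ) (m : ℕ → V) (π : ∀ i j : ℕ, G.Walk (m i) (m j))
    (hπ : ∀ i j : ℕ, 1 ≤ i → i ≤ j → j ≤ ℓ → (π i j).length ≤ 2 * r)
    (hm : ∀ k : ℕ, 1 ≤ k → k ≤ ℓ → IsLeast (ballAvoiding G r (Sk G m π (k - 1)) v) (m k)) :
    (∀ k : ℕ, 1 ≤ k → k ≤ ℓ → m k ∈ wreach G r v) ∧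
    (Sk G m π ℓ).encard ≤ (2 * r * ℓ ^ 2 : ℕ) ∧
    (∀ u : V, ∀ k : ℕ, 1 ≤ k → k ≤ ℓ → ¬ Separates G r (Sk G m π (k - 1)) u v →
      ∀ j : ℕ, 1 ≤ j → j ≤ k → m j ∈ wreach G (2 * r) u) := by
  refine ⟨fun k hk hkℓ ↦ mem_wreach_of_isLeast_ballAvoiding (hm k hk hkℓ),
    encard_Sk_le (by lia) hπ, fun u k _ hkℓ hsep j hj hjk ↦ ?_⟩
  have hu : u ∈ ballAvoiding G r (Sk G m π (k - 1)) v :=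
    mem_ballAvoiding_comm.mpr (mem_ballAvoiding_of_not_separates hsep)
  rw [two_mul]
  exact mem_wreach_add_of_isLeast_ballAvoiding (hm j hj (hjk.trans hkℓ)) le_rfl
    (ballAvoiding_anti (Sk_mono (Nat.sub_le_sub_right hjk 1)) hu)

theorem statement7 [Fintype V] [LinearOrder V] (G : SimpleGraph V) (r : ℕ) (hr : 1 ≤ r)
    (v : V) (ℓ : ℕ) (m : ℕ → V) (π : ∀ i j : ℕ, G.Walk (m i) (m j))
    -- each `π i j` (for `1 ≤ i ≤ j ≤ ℓ`) is a path of length at most `2r`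
    (hπ : ∀ i j : ℕ, 1 ≤ i → i ≤ j → j ≤ ℓ → (π i j).IsPath ∧ (π i j).length ≤ 2 * r)
    -- (i) `v` is a vertex of `G_k`, i.e. `v ∉ S^{k-1}`
    (hv : ∀ k : ℕ, 1 ≤ k → k ≤ ℓ → v ∉ Sk G m π (k - 1))
    -- (ii) `m k` is a vertex of `G_k` at distance at most `r` from `v` in `G_k`, and it is
    -- `≤`-minimal among all vertices of `G_k` at distance at most `r` from `v` in `G_k`
    (hm : ∀ k : ℕ, 1 ≤ k → k ≤ ℓ →
      (∃ p : G.Walk v (m k), p.IsPath ∧ p.length ≤ r ∧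
        ∀ w ∈ p.support, w ∉ Sk G m π (k - 1)) ∧
      (∀ w : V, (∃ p : G.Walk v w, p.IsPath ∧ p.length ≤ r ∧
        ∀ x ∈ p.support, x ∉ Sk G m π (k - 1)) → m k ≤ w))
    -- (iii) all vertices of `π i k` lie in `G_i`
    (hπk : ∀ i k : ℕ, 1 ≤ i → i ≤ k → k ≤ ℓ →
      ∀ w ∈ (π i k).support, w ∉ Sk G m π (i - 1)) :
    -- (a)
    (∀ k : ℕ, 1 ≤ k → k ≤ ℓ → m k ∈ wreach G r v) ∧
    -- (b)
    (Sk G m π ℓ).ncard ≤ 2 * r * ℓ ^ 2 ∧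
    -- (c)
    (∀ u : V, ∀ k : ℕ, 1 ≤ k → k ≤ ℓ → ¬ Separates G r (Sk G m π (k - 1)) u v →
      ∀ j : ℕ, 1 ≤ j → j ≤ k → m j ∈ wreach G (2 * r) u) := by
  have ⟨hwreach, hcard, hsep⟩ := statement7_general G r hr v ℓ m π
    (fun i j hi hij hj ↦ (hπ i j hi hij hj).2) hm
  exact ⟨hwreach, ENat.toNat_le_of_le_natCast hcard, hsep⟩
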